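/- Let T be a decision tree, let w be an inner node of T with children u and u', and let m = 1 plus the number of inner nodes of the subtree rooted at u'. Then the tree obtained from T by the single subtree raising operation at w keeping u (which prunes m inner nodes) can also be obtained from T by a sequence of m subtree raising operations, each applied to an inner node at least one of whose two children is a leaf and each pruning exactly one inner node. -/

import Mathlib

/-- The two class labels. -/
inductive Label where
  | blue
  | red
deriving DecidableEq

/-- A decision tree over examples `ι → ℝ` with classes `{blue, red}`:
every inner node carries a feature and a threshold, every leaf a class label.
An example goes to the left child if its value in the node's feature is at most
the threshold, and to the right child otherwise. -/
inductive DTree (ι : Type) where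
  | leaf (c : Label)
  | node (feat : ι) (thr : ℝ) (left right : DTree ι)

namespace DTree

variable {ι : Type}

/-- The class that a decision tree assigns to an example. -/
noncomputable def classify : DTree ι → (ι → ℝ) → Label
  | .leaf c, _ => c
  | .node f t l r, e => if e f ≤ t then l.classify e else r.classify e

/-- The routing path of an example (`false` = left child, `true` = right child);
it is the position of the leaf of the example. -/
noncomputable def route : DTree ι → (ι → ℝ) → List Bool
  | .leaf _, _ => []
  | .node f t l r, e => if e f ≤ t then false :: l.route e else true :: r.route e

/-- The subtree rooted at a position (`none` if the position is not a node). -/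
def subtreeAt : DTree ι → List Bool → Option (DTree ι)
  | T, [] => some T
  | .leaf _, _ :: _ => none
  | .node _ _ l r, b :: p => (if b then r else l).subtreeAt p

/-- Replace the subtree at a given position by another tree. -/
def replaceAt : DTree ι → List Bool → DTree ι → DTree ι
  | _, [], T' => T'
  | .leaf c, _ :: _, _ => .leaf c
  | .node f t l r, b :: p, T' =>
      if b then .node f t l (r.replaceAt p T') else .node f t (l.replaceAt p T') r

/-- The number of inner nodes of a decision tree. -/
def innerCount : DTree ι → ℕ
  | .leaf _ => 0
  | .node _ _ l r => 1 + l.innerCount + r.innerCount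

/-- The position `p` is an inner node of `T`. -/
def IsInnerPos (T : DTree ι) (p : List Bool) : Prop :=
  ∃ f t l r, T.subtreeAt p = some (.node f t l r)

/-- The position `p` is a node of `T`. -/
def IsNodePos (T : DTree ι) (p : List Bool) : Prop :=
  (T.subtreeAt p).isSome

/-- The feature and threshold of the inner node at position `p`. -/
def cutAt (T : DTree ι) (p : List Bool) : Option (ι × ℝ) :=
  match T.subtreeAt p with
  | some (.node f t _ _) => some (f, t)
  | _ => none

/-- The subtree raising operation at position `q` keeping the child in direction `b`:
the subtree rooted at `q` is replaced by the subtree rooted at its `b`-child; it prunes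
the node at `q` together with all inner nodes of the subtree rooted at the other child. -/
def raiseAt (T : DTree ι) (q : List Bool) (b : Bool) : DTree ι :=
  match T.subtreeAt q with
  | some (.node _ _ l r) => T.replaceAt q (if b then r else l)
  | _ => T

end DTree

/-- `E[T,p]`: the examples of `E` whose routing through `T` passes the position `p`. -/
noncomputable def reach {ι : Type} (E : Finset (ι → ℝ)) (T : DTree ι) (p : List Bool) :
    Finset (ι → ℝ) :=
  E.filter fun e => p <+: T.route e

/-- The number of errors of `T` on the training set `(E, lab)`. -/
noncomputable def errCount {ι : Type} (T : DTree ι) (E : Finset (ι → ℝ))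
    (lab : (ι → ℝ) → Label) : ℕ :=
  (E.filter fun e => T.classify e ≠ lab e).card

/-- A most frequent label of the labeled set `(E, lab)` (blue in case of a tie). -/
def majorityLabel {ι : Type} (E : Finset (ι → ℝ)) (lab : (ι → ℝ) → Label) : Label :=
  if (E.filter fun e => lab e = Label.red).card ≤ (E.filter fun e => lab e = Label.blue).card
  then Label.blue else Label.red

/-- One subtree replacement operation: some inner node of `T` is replaced by a leaf
labeled with a most frequent label of the examples reaching it. -/
def ReplStep {ι : Type} (E : Finset (ι → ℝ)) (lab : (ι → ℝ) → Label)
    (T T' : DTree ι) : Prop :=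
  ∃ p, T.IsInnerPos p ∧
    T' = T.replaceAt p (.leaf (majorityLabel (reach E T p) lab))

/-- `T` is a reasonable decision tree for `(E, lab)`: every node is reached by some
example and every leaf carries a most frequent label of the examples reaching it. -/
def Reasonable {ι : Type} (E : Finset (ι → ℝ)) (lab : (ι → ℝ) → Label)
    (T : DTree ι) : Prop :=
  (∀ p, T.IsNodePos p → (reach E T p).Nonempty) ∧
  (∀ p c, T.subtreeAt p = some (.leaf c) → ∀ c' : Label,
    ((reach E T p).filter fun e => lab e = c').card ≤
      ((reach E T p).filter fun e => lab e = c).card)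

/-- Apply a sequence of raising operations (given by positions and kept directions). -/
def applySeq {ι : Type} : DTree ι → List (List Bool × Bool) → DTree ι
  | T, [] => T
  | T, (q, b) :: rest => applySeq (T.raiseAt q b) rest

/-- Each raising operation of the sequence is applied at an inner node. -/
def ValidSeq {ι : Type} : DTree ι → List (List Bool × Bool) → Prop
  | _, [] => True
  | T, (q, b) :: rest => T.IsInnerPos q ∧ ValidSeq (T.raiseAt q b) rest

/-- The total number of inner nodes pruned by a sequence of raising operations. -/
def seqPruned {ι : Type} : DTree ι → List (List Bool × Bool) → ℕ
  | _, [] => 0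
  | T, (q, b) :: rest =>
      (match T.subtreeAt q with
        | some (.node _ _ l r) => 1 + DTree.innerCount (if b then l else r)
        | _ => 0) + seqPruned (T.raiseAt q b) rest

/-- `T'` is obtained from `T` by a (possibly empty) sequence of subtree raising
operations. -/
def RaisedFrom {ι : Type} (T T' : DTree ι) : Prop :=
  ∃ steps, ValidSeq T steps ∧ applySeq T steps = T'

/-- `T'` is obtained from `T` by a sequence of subtree raising operations pruning
exactly `m` inner nodes in total. -/
def RaisedFromPruning {ι : Type} (T : DTree ι) (m : ℕ) (T' : DTree ι) : Prop :=
  ∃ steps, ValidSeq T steps ∧ seqPruned T steps = m ∧ applySeq T steps = T'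

/-- Tracking the position of a node through one raising operation: nodes strictly
below the raised node on the discarded side, and the raised node itself, are pruned
(`none`); all other nodes survive at a possibly shifted position. -/
def stepMap (q : List Bool) (b : Bool) (p : List Bool) : Option (List Bool) :=
  if q <+: p then
    if q ++ [b] <+: p then some (q ++ p.drop (q.length + 1)) else none
  else some p

/-- Tracking the position of a node through a sequence of raising operations. -/
def seqMap : List (List Bool × Bool) → List Bool → Option (List Bool)
  | [], p => some p
  | (q, b) :: rest, p => (stepMap q b p).bind (seqMap rest)

/-- The number of errors of `T` on a multiset of labeled examples. -/
noncomputable def errCountM {ι : Type} (T : DTree ι) (E : Multiset ((ι → ℝ) × Label)) : ℕ :=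
  (E.filter fun q => T.classify q.1 ≠ q.2).card

/-- A sequence of subtree raising operations, each applied to an inner node whose
discarded child is a leaf — so each operation is applied at an inner node at least
one of whose two children is a leaf and prunes exactly one inner node; the count is
the number of operations performed. -/
inductive RaiseLeafSeq {d : ℕ} : DTree (Fin d) → ℕ → DTree (Fin d) → Prop
  | refl (T : DTree (Fin d)) : RaiseLeafSeq T 0 T
  | step {T T'' : DTree (Fin d)} {m : ℕ} (p : List Bool) (b : Bool) (f : Fin d)
      (t : ℝ) (l r : DTree (Fin d)) (c : Label) :
      T.subtreeAt p = some (.node f t l r) →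
      (if b then l else r) = .leaf c →
      RaiseLeafSeq (T.replaceAt p (if b then r else l)) m T'' →
      RaiseLeafSeq T (m + 1) T''

/- The kept child survives any operation inside the discarded one. So collapse the discarded
subtree `D` to a single leaf, one inner node at a time: collapse the left part of `D`, raise its
right part over the resulting leaf, and continue with the right part. This takes one operation per
inner node of `D`, and one last operation raises the kept child over the leaf that remains. -/

namespace DTree

variable {ι : Type} {T S : DTree ι} {p : List Bool}

theorem subtreeAt_append (h : T.subtreeAt p = some S) (q : List Bool) :
    T.subtreeAt (p ++ q) = S.subtreeAt q := by
  induction p generalizing T with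
  | nil => simp_all [subtreeAt]
  | cons a p ih =>
    cases T with
    | leaf c => simp [subtreeAt] at h
    | node f t l r => exact ih h

theorem replaceAt_append (h : T.subtreeAt p = some S) (q : List Bool) (X : DTree ι) :
    T.replaceAt (p ++ q) X = T.replaceAt p (S.replaceAt q X) := by
  induction p generalizing T with
  | nil => simp_all [subtreeAt, replaceAt]
  | cons a p ih =>
    cases T with
    | leaf c => rfl
    | node f t l r => cases a <;> simp_all [subtreeAt, replaceAt]

theorem replaceAt_self (h : T.subtreeAt p = some S) : T.replaceAt p S = T := by
  induction p generalizing T with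
  | nil => simp_all [subtreeAt, replaceAt]
  | cons a p ih =>
    cases T with
    | leaf c => rfl
    | node f t l r => cases a <;> simp_all [subtreeAt, replaceAt]

theorem subtreeAt_replaceAt (h : T.subtreeAt p = some S) (X : DTree ι) :
    (T.replaceAt p X).subtreeAt p = some X := by
  induction p generalizing T with
  | nil => simp [subtreeAt, replaceAt]
  | cons a p ih =>
    cases T with
    | leaf c => simp [subtreeAt] at h
    | node f t l r => cases a <;> simp_all [subtreeAt, replaceAt]

theorem replaceAt_replaceAt (T : DTree ι) (p : List Bool) (X Y : DTree ι) :
    (T.replaceAt p X).replaceAt p Y = T.replaceAt p Y := by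
  induction p generalizing T with
  | nil => simp [replaceAt]
  | cons a p ih =>
    cases T with
    | leaf c => rfl
    | node f t l r => cases a <;> simp_all [replaceAt]

end DTree

namespace RaiseLeafSeq

variable {d : ℕ}

theorem trans {T T' T'' : DTree (Fin d)} {m n : ℕ}
    (h : RaiseLeafSeq T m T') (h' : RaiseLeafSeq T' n T'') : RaiseLeafSeq T (m + n) T'' := by
  induction h with
  | refl T => simpa only [Nat.zero_add] using h'
  | step p b f t l r c hp hc _ ih =>
    rw [Nat.add_right_comm]
    exact .step p b f t l r c hp hc (ih h')

theorem replaceAt {T S S' : DTree (Fin d)} {w : List Bool} {m : ℕ}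
    (h : RaiseLeafSeq S m S') (hw : T.subtreeAt w = some S) :
    RaiseLeafSeq T m (T.replaceAt w S') := by
  induction h generalizing T with
  | refl S =>
    rw [DTree.replaceAt_self hw]
    exact .refl T
  | step p b f t l r c hp hc _ ih =>
    have tail := ih (DTree.subtreeAt_replaceAt hw _)
    rw [DTree.replaceAt_replaceAt, ← DTree.replaceAt_append hw] at tail
    exact .step (w ++ p) b f t l r c ((DTree.subtreeAt_append hw p).trans hp) hc tail

section Node

variable {l r : DTree (Fin d)} {m : ℕ} {c : Label} (f : Fin d) (t : ℝ)

theorem raise_right (h : RaiseLeafSeq l m (.leaf c)) (r : DTree (Fin d)) :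
    RaiseLeafSeq (.node f t l r) (m + 1) r := by
  have collapse : RaiseLeafSeq (.node f t l r) m (.node f t (.leaf c) r) := by
    simpa [DTree.replaceAt] using h.replaceAt (T := .node f t l r) (w := [false]) rfl
  exact collapse.trans (.step [] true f t (.leaf c) r c rfl rfl (.refl r))

theorem raise_left (l : DTree (Fin d)) (h : RaiseLeafSeq r m (.leaf c)) :
    RaiseLeafSeq (.node f t l r) (m + 1) l := by
  have collapse : RaiseLeafSeq (.node f t l r) m (.node f t l (.leaf c)) := by
    simpa [DTree.replaceAt] using h.replaceAt (T := .node f t l r) (w := [true]) rfl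
  exact collapse.trans (.step [] false f t l (.leaf c) c rfl rfl (.refl l))

end Node

theorem exists_leaf (T : DTree (Fin d)) : ∃ c, RaiseLeafSeq T T.innerCount (.leaf c) := by
  induction T with
  | leaf c => exact ⟨c, .refl _⟩
  | node f t l r ihl ihr =>
    obtain ⟨_, collapse_left⟩ := ihl
    obtain ⟨c, collapse_right⟩ := ihr
    refine ⟨c, ?_⟩
    rw [DTree.innerCount, Nat.add_comm 1]
    exact (collapse_left.raise_right f t r).trans collapse_right

theorem raise_root (b : Bool) (f : Fin d) (t : ℝ) (l r : DTree (Fin d)) :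
    RaiseLeafSeq (.node f t l r) (1 + (if b then l else r).innerCount) (if b then r else l) := by
  rw [Nat.add_comm]
  cases b with
  | false =>
    obtain ⟨_, collapse⟩ := exists_leaf r
    exact raise_left f t l collapse
  | true =>
    obtain ⟨_, collapse⟩ := exists_leaf l
    exact collapse.raise_right f t r

end RaiseLeafSeq

/-- Let `w` be an inner node of `T` with children `l` and `r`,
let `b` select the kept child `u` (`r` if `b`, else `l`), and let
`m = 1 +` (number of inner nodes of the discarded child's subtree). Then the tree
obtained from `T` by the single subtree raising operation at `w` keeping `u`
(which prunes `m` inner nodes) can also be obtained from `T` by a sequence of `m`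
subtree raising operations, each applied to an inner node at least one of whose
two children is a leaf and each pruning exactly one inner node. -/
theorem stmt17 {d : ℕ} (T : DTree (Fin d)) (w : List Bool) (b : Bool) (f : Fin d)
    (t : ℝ) (l r : DTree (Fin d))
    (hw : T.subtreeAt w = some (.node f t l r)) :
    RaiseLeafSeq T (1 + DTree.innerCount (if b then l else r))
      (T.replaceAt w (if b then r else l)) :=
  (RaiseLeafSeq.raise_root b f t l r).replaceAt hw
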